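/- Let p > 1 and a > 0, and let F(u) = |u|^{p−1}u or F(u) = |u|^p. Let f ∈ C²(ℝ) with ‖f‖_{L∞(ℝ)} < ∞ and g ∈ C¹(ℝ) with ‖g‖_{L¹(ℝ)} < ∞. Then there exists a positive constant c = c(f,g,a,p) such that for every ε > 0 and every T with 0 < T ≤ c·ε^{−(p−1)}, there exists a bounded continuous function u on ℝ×[0,T] satisfying the integral equation u(x,t) = ε·u⁰(x,t) + (1/2)∬_{D(x,t)} F(u(y,s))·(1+y²)^{−(1+a)/2} dy ds for all (x,t) ∈ ℝ×[0,T]. In particular the lifespan satisfies T_ε ≥ c·ε^{−(p−1)}. -/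

import Mathlib

open MeasureTheory Real Set Filter

open scoped BoundedContinuousFunction NNReal

/-!
Since `a > 0`, the weight `(1 + y²) ^ (-(1 + a) / 2)` has finite mass, so integrating a function
bounded by `C` against it over a backward characteristic triangle of height `t ≤ T` gives at most a
multiple of `T * C`, with a factor `T` instead of `T ^ 2`. On the ball of radius `M = 2 ε ‖u⁰‖` the
nonlinearity is Lipschitz with constant of order `ε ^ (p - 1)`; hence for `T ≤ c ε ^ (-(p - 1))` the
Picard map is a contraction with constant `1 / 2`. To iterate it on the whole space, the
nonlinearity is first extended from `[-M, M]` to a globally Lipschitz function; as it vanishes at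
`0`, the fixed point `u` satisfies `‖u‖ ≤ 2 ‖ε u⁰‖ = M`, so it never sees the extension.
-/

section PowerNonlinearity

variable {E G : Type*} [NormedAddCommGroup E] [NormedAddCommGroup G]

/-- A nonlinearity of degree `p`: it vanishes at the origin, and its Lipschitz constant on the ball
of radius `M` is at most `κ * M ^ (p - 1)`. Both `|u| ^ p` and `|u| ^ (p - 1) * u` are of this kind
with `κ = p`. -/
structure IsPowerNonlinearity (p κ : ℝ) (F : E → G) : Prop where
  map_zero : F 0 = 0
  norm_sub_le : ∀ x y, ‖F x - F y‖ ≤ κ * max ‖x‖ ‖y‖ ^ (p - 1) * ‖x - y‖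

namespace IsPowerNonlinearity

variable {p κ : ℝ} {F : E → G}

lemma coeff_nonneg {F : ℝ → G} (hF : IsPowerNonlinearity p κ F) : 0 ≤ κ :=
  (norm_nonneg _).trans (by simpa using hF.norm_sub_le 1 0)

lemma lipschitzOnWith_closedBall (hF : IsPowerNonlinearity p κ F) (hp : 1 ≤ p) (hκ : 0 ≤ κ)
    (M : ℝ) : LipschitzOnWith (κ * M ^ (p - 1)).toNNReal F (Metric.closedBall 0 M) := by
  refine LipschitzOnWith.of_dist_le' fun x hx y hy => ?_
  rw [mem_closedBall_zero_iff] at hx hy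
  have hmax : max ‖x‖ ‖y‖ ^ (p - 1) ≤ M ^ (p - 1) :=
    rpow_le_rpow (by positivity) (max_le hx hy) (sub_nonneg.2 hp)
  rw [dist_eq_norm, dist_eq_norm]
  calc ‖F x - F y‖ ≤ κ * max ‖x‖ ‖y‖ ^ (p - 1) * ‖x - y‖ := hF.norm_sub_le x y
    _ ≤ κ * M ^ (p - 1) * ‖x - y‖ := by gcongr

end IsPowerNonlinearity

lemma rpow_sub_rpow_le {p r s : ℝ} (hp : 1 ≤ p) (hs : 0 ≤ s) (hsr : s ≤ r) :
    r ^ p - s ^ p ≤ p * r ^ (p - 1) * (r - s) := by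
  rcases hsr.eq_or_lt with rfl | hlt
  · simp
  · have hslope := (convexOn_rpow hp).slope_le_of_hasDerivAt hs (hs.trans hsr) hlt
      (hasDerivAt_rpow_const (Or.inr hp))
    rwa [slope_def_field, div_le_iff₀ (sub_pos.2 hlt)] at hslope

lemma abs_rpow_sub_rpow_le {p r s : ℝ} (hp : 1 ≤ p) (hr : 0 ≤ r) (hs : 0 ≤ s) :
    |r ^ p - s ^ p| ≤ p * max r s ^ (p - 1) * |r - s| := by
  wlog hsr : s ≤ r generalizing r s
  · simpa only [abs_sub_comm, max_comm] using this hs hr (le_of_not_ge hsr)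
  · rw [max_eq_left hsr, abs_of_nonneg (sub_nonneg.2 hsr),
      abs_of_nonneg (sub_nonneg.2 (rpow_le_rpow hs hsr (by linarith)))]
    exact rpow_sub_rpow_le hp hs hsr

lemma isPowerNonlinearity_norm_rpow {p : ℝ} (hp : 1 ≤ p) :
    IsPowerNonlinearity p p fun x : E => ‖x‖ ^ p where
  map_zero := by rw [norm_zero, zero_rpow (by linarith)]
  norm_sub_le x y :=
    (abs_rpow_sub_rpow_le hp (norm_nonneg x) (norm_nonneg y)).trans <|
      mul_le_mul_of_nonneg_left (abs_norm_sub_norm_le x y) (by positivity)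

/-- Splitting off the larger norm keeps the sharp constant `p`: the increment of the scalar factor
contributes only `(p - 1) * ‖x‖ ^ (p - 1)`. -/
lemma norm_rpow_smul_sub_le [NormedSpace ℝ E] {p : ℝ} (hp : 1 ≤ p) {x y : E} (hyx : ‖y‖ ≤ ‖x‖) :
    ‖‖x‖ ^ (p - 1) • x - ‖y‖ ^ (p - 1) • y‖ ≤ p * ‖x‖ ^ (p - 1) * ‖x - y‖ := by
  have rpow_split (z : E) : ‖z‖ ^ p = ‖z‖ ^ (p - 1) * ‖z‖ := by
    rw [← rpow_add_one' (norm_nonneg z) (by linarith), sub_add_cancel]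
  have hpow : ‖y‖ ^ (p - 1) ≤ ‖x‖ ^ (p - 1) :=
    rpow_le_rpow (norm_nonneg y) hyx (by linarith)
  have hscalar : (‖x‖ ^ (p - 1) - ‖y‖ ^ (p - 1)) * ‖y‖
      ≤ (p - 1) * ‖x‖ ^ (p - 1) * (‖x‖ - ‖y‖) := by
    have htangent := rpow_sub_rpow_le hp (norm_nonneg y) hyx
    rw [rpow_split x, rpow_split y] at htangent
    linarith
  calc ‖‖x‖ ^ (p - 1) • x - ‖y‖ ^ (p - 1) • y‖
      = ‖‖x‖ ^ (p - 1) • (x - y) + (‖x‖ ^ (p - 1) - ‖y‖ ^ (p - 1)) • y‖ := by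
        congr 1; module
    _ ≤ ‖x‖ ^ (p - 1) * ‖x - y‖ + (‖x‖ ^ (p - 1) - ‖y‖ ^ (p - 1)) * ‖y‖ := by
        refine (norm_add_le _ _).trans_eq ?_
        rw [norm_smul_of_nonneg (by positivity), norm_smul_of_nonneg (sub_nonneg.2 hpow)]
    _ ≤ ‖x‖ ^ (p - 1) * ‖x - y‖ + (p - 1) * ‖x‖ ^ (p - 1) * ‖x - y‖ := by
        have hp0 : 0 ≤ p - 1 := sub_nonneg.2 hp
        grw [hscalar, norm_sub_norm_le x y]
    _ = p * ‖x‖ ^ (p - 1) * ‖x - y‖ := by ring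

lemma isPowerNonlinearity_norm_rpow_smul [NormedSpace ℝ E] {p : ℝ} (hp : 1 ≤ p) :
    IsPowerNonlinearity p p fun x : E => ‖x‖ ^ (p - 1) • x where
  map_zero := smul_zero _
  norm_sub_le x y := by
    rcases le_total ‖y‖ ‖x‖ with hyx | hxy
    · rw [max_eq_left hyx]
      exact norm_rpow_smul_sub_le hp hyx
    · rw [max_eq_right hxy, norm_sub_rev, norm_sub_rev x y]
      exact norm_rpow_smul_sub_le hp hxy

end PowerNonlinearity

section ConeIntegral

variable {E : Type*} [NormedAddCommGroup E] [NormedSpace ℝ E] {μ : Measure ℝ}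

/-- The integral of `h` over the backward characteristic triangle `D(x, t)` at the point
`q = (x, t)`, with respect to `μ` in space and Lebesgue measure in time. -/
noncomputable def coneIntegral (μ : Measure ℝ) (h : ℝ × ℝ → E) (q : ℝ × ℝ) : E :=
  ∫ s in (0:ℝ)..q.2, ∫ y in (q.1 - q.2 + s)..(q.1 + q.2 - s), h (y, s) ∂μ

lemma norm_intervalIntegral_le_mul_measureReal_univ [IsFiniteMeasure μ] {h : ℝ → E} {C : ℝ}
    (hC : ∀ y, ‖h y‖ ≤ C) (a b : ℝ) : ‖∫ y in a..b, h y ∂μ‖ ≤ C * μ.real univ := by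
  have hC0 : 0 ≤ C := (norm_nonneg _).trans (hC 0)
  rw [intervalIntegral.norm_intervalIntegral_eq]
  calc ‖∫ y in uIoc a b, h y ∂μ‖ ≤ C * μ.real (uIoc a b) :=
        norm_setIntegral_le_of_norm_le_const (measure_lt_top _ _) fun y _ => hC y
    _ ≤ C * μ.real univ := by gcongr; exacts [measure_ne_top μ univ, subset_univ _]

lemma norm_coneIntegral_le [IsFiniteMeasure μ] {h : ℝ × ℝ → E} {C : ℝ} (hC : ∀ q, ‖h q‖ ≤ C)
    (q : ℝ × ℝ) : ‖coneIntegral μ h q‖ ≤ |q.2| * μ.real univ * C := by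
  refine (intervalIntegral.norm_integral_le_of_norm_le_const fun s _ =>
    norm_intervalIntegral_le_mul_measureReal_univ (fun y => hC (y, s)) _ _).trans_eq ?_
  rw [sub_zero]
  ring

lemma coneIntegral_smul (c : ℝ) (h : ℝ × ℝ → E) (q : ℝ × ℝ) :
    coneIntegral μ (c • h) q = c • coneIntegral μ h q := by
  simp only [coneIntegral, Pi.smul_apply, intervalIntegral.integral_smul]

variable [IsLocallyFiniteMeasure μ] [NullSingletonClass μ]

lemma continuous_intervalIntegral_of_continuous {X : Type*} [TopologicalSpace X]
    [FirstCountableTopology X] {h : X → ℝ → E} (hh : Continuous h.uncurry) {a b : X → ℝ}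
    (ha : Continuous a) (hb : Continuous b) : Continuous fun x => ∫ y in a x..b x, h x y ∂μ := by
  have hint (x : X) (c d : ℝ) : IntervalIntegrable (h x) μ c d :=
    (hh.uncurry_left x).intervalIntegrable c d
  have hsub (x : X) : ∫ y in a x..b x, h x y ∂μ =
      (∫ y in (0:ℝ)..b x, h x y ∂μ) - ∫ y in (0:ℝ)..a x, h x y ∂μ :=
    (intervalIntegral.integral_interval_sub_left (hint x 0 _) (hint x 0 _)).symm
  simp only [hsub]
  fun_prop

lemma continuous_sliceIntegral {h : ℝ × ℝ → E} (hh : Continuous h) :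
    Continuous fun r : (ℝ × ℝ) × ℝ =>
      ∫ y in (r.1.1 - r.1.2 + r.2)..(r.1.1 + r.1.2 - r.2), h (y, r.2) ∂μ :=
  continuous_intervalIntegral_of_continuous (h := fun (r : (ℝ × ℝ) × ℝ) y => h (y, r.2))
    (by fun_prop) (by fun_prop) (by fun_prop)

lemma continuous_coneIntegral {h : ℝ × ℝ → E} (hh : Continuous h) :
    Continuous (coneIntegral μ h) :=
  continuous_intervalIntegral_of_continuous
    (h := fun (q : ℝ × ℝ) s => ∫ y in (q.1 - q.2 + s)..(q.1 + q.2 - s), h (y, s) ∂μ)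
    (continuous_sliceIntegral hh) continuous_const continuous_snd

lemma coneIntegral_add {h k : ℝ × ℝ → E} (hh : Continuous h) (hk : Continuous k) (q : ℝ × ℝ) :
    coneIntegral μ (h + k) q = coneIntegral μ h q + coneIntegral μ k q := by
  have hslice {f : ℝ × ℝ → E} (hf : Continuous f) (s c d : ℝ) :
      IntervalIntegrable (fun y => f (y, s)) μ c d :=
    (by fun_prop : Continuous fun y => f (y, s)).intervalIntegrable c d
  have houter {f : ℝ × ℝ → E} (hf : Continuous f) : IntervalIntegrable
      (fun s => ∫ y in (q.1 - q.2 + s)..(q.1 + q.2 - s), f (y, s) ∂μ) volume 0 q.2 :=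
    ((continuous_sliceIntegral hf).comp (.prodMk_right q)).intervalIntegrable 0 q.2
  simp only [coneIntegral, Pi.add_apply,
    intervalIntegral.integral_add (hslice hh _ _ _) (hslice hk _ _ _)]
  exact intervalIntegral.integral_add (houter hh) (houter hk)

end ConeIntegral

section ConeOperator

variable {E : Type*} [NormedAddCommGroup E] [NormedSpace ℝ E] {μ : Measure ℝ} [IsFiniteMeasure μ]
  {T : ℝ}

lemma norm_coneIntegral_projIcc_le {h : ℝ × ℝ → E} {C : ℝ} (hC : ∀ q, ‖h q‖ ≤ C) (hT : 0 ≤ T)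
    (q : ℝ × ℝ) : ‖coneIntegral μ h (q.1, projIcc 0 T hT q.2)‖ ≤ T * μ.real univ * C := by
  have hC0 : 0 ≤ C := (norm_nonneg _).trans (hC 0)
  obtain ⟨ht0, htT⟩ := (projIcc 0 T hT q.2).2
  refine (norm_coneIntegral_le hC _).trans ?_
  rw [abs_of_nonneg ht0]
  gcongr

variable [NullSingletonClass μ]

variable (μ) in
/-- The integral over backward characteristic triangles as an operator on bounded continuous
functions on the plane. The time variable is clamped to `[0, T]`, which keeps the result bounded
and agrees with `coneIntegral` on `ℝ × [0, T]`. -/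
noncomputable def coneOperator (hT : 0 ≤ T) : (ℝ × ℝ →ᵇ E) →L[ℝ] (ℝ × ℝ →ᵇ E) :=
  LinearMap.mkContinuous
    { toFun h := .ofNormedAddCommGroup (fun q => coneIntegral μ h (q.1, projIcc 0 T hT q.2))
        ((continuous_coneIntegral h.continuous).comp (by fun_prop)) (T * μ.real univ * ‖h‖)
        (norm_coneIntegral_projIcc_le h.norm_coe_le_norm hT)
      map_add' h k := by
        ext q
        exact coneIntegral_add h.continuous k.continuous _
      map_smul' c h := by
        ext q
        exact coneIntegral_smul c h _ }
    (T * μ.real univ)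
    fun h => BoundedContinuousFunction.norm_ofNormedAddCommGroup_le _ (by positivity)
      (norm_coneIntegral_projIcc_le h.norm_coe_le_norm hT)

lemma coneOperator_apply_of_mem_Icc (hT : 0 ≤ T) (h : ℝ × ℝ →ᵇ E) (x : ℝ) {t : ℝ}
    (ht : t ∈ Icc 0 T) : coneOperator μ hT h (x, t) = coneIntegral μ h (x, t) := by
  change coneIntegral μ h (x, projIcc 0 T hT t) = _
  rw [projIcc_of_mem hT ht]

lemma norm_coneOperator_le (hT : 0 ≤ T) :
    ‖(coneOperator μ hT : (ℝ × ℝ →ᵇ E) →L[ℝ] _)‖ ≤ T * μ.real univ :=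
  LinearMap.mkContinuous_norm_le _ (by positivity) _

end ConeOperator

section PicardIteration

variable {E : Type*} [NormedAddCommGroup E] [NormedSpace ℝ E] {μ : Measure ℝ} [IsFiniteMeasure μ]
  [NullSingletonClass μ] {T : ℝ} {K : ℝ≥0}

variable (μ) in
/-- The Picard map `v ↦ U + L(H(v)) / 2` of the integral equation, where `L` is the integral over
backward characteristic triangles. -/
noncomputable def picardMap (hT : 0 ≤ T) {H : E → E} (hH : LipschitzWith K H)
    (U v : ℝ × ℝ →ᵇ E) : ℝ × ℝ →ᵇ E :=
  U + (1 / 2 : ℝ) • coneOperator μ hT (v.comp H hH)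

lemma contractingWith_picardMap (hT : 0 ≤ T) {H : E → E} (hH : LipschitzWith K H)
    (hTK : T * μ.real univ * K ≤ 1) (U : ℝ × ℝ →ᵇ E) :
    ContractingWith (1 / 2) (picardMap μ hT hH U) := by
  refine ⟨by norm_num, LipschitzWith.of_dist_le_mul fun v w => ?_⟩
  rw [picardMap, picardMap, dist_add_left, dist_smul₀]
  calc ‖(1 / 2 : ℝ)‖ * dist (coneOperator μ hT (v.comp H hH)) (coneOperator μ hT (w.comp H hH))
      ≤ ‖(1 / 2 : ℝ)‖ * (T * μ.real univ * (K * dist v w)) := by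
        gcongr
        refine ((coneOperator (E := E) μ hT).dist_le_opNorm _ _).trans ?_
        gcongr
        · exact norm_coneOperator_le hT
        · exact (BoundedContinuousFunction.lipschitz_comp hH).dist_le_mul v w
    _ = ‖(1 / 2 : ℝ)‖ * (T * μ.real univ * K * dist v w) := by ring
    _ ≤ ‖(1 / 2 : ℝ)‖ * (1 * dist v w) := by gcongr
    _ = ((1 / 2 : ℝ≥0) : ℝ) * dist v w := by norm_num

theorem exists_eq_add_coneIntegral_of_lipschitzWith [CompleteSpace E] (hT : 0 ≤ T) {H : E → E}
    (hH : LipschitzWith K H) (hH0 : H 0 = 0) (hTK : T * μ.real univ * K ≤ 1) (U : ℝ × ℝ →ᵇ E) :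
    ∃ u : ℝ × ℝ →ᵇ E, ‖u‖ ≤ 2 * ‖U‖ ∧ ∀ x, ∀ t ∈ Icc 0 T,
      u (x, t) = U (x, t) + (1 / 2 : ℝ) • coneIntegral μ (H ∘ u) (x, t) := by
  have hcontr := contractingWith_picardMap hT hH hTK U
  obtain ⟨u, hu⟩ : ∃ u, u = hcontr.fixedPoint := ⟨_, rfl⟩
  have hfix : picardMap μ hT hH U u = u := hu ▸ hcontr.fixedPoint_isFixedPt
  have hzero : picardMap μ hT hH U 0 = U := by
    have hcomp : (0 : ℝ × ℝ →ᵇ E).comp H hH = 0 := by ext; exact hH0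
    rw [picardMap, hcomp, map_zero, smul_zero, add_zero]
  refine ⟨u, ?_, fun x t ht => ?_⟩
  · have hdist := hcontr.dist_fixedPoint_le 0
    have hhalf : (1 : ℝ) - ((1 / 2 : ℝ≥0) : ℝ) = 1 / 2 := by norm_num
    rw [← hu, hzero, dist_zero_left, dist_zero_left, hhalf] at hdist
    linarith
  · conv_lhs => rw [← hfix]
    rw [picardMap, BoundedContinuousFunction.add_apply, BoundedContinuousFunction.smul_apply,
      coneOperator_apply_of_mem_Icc hT _ x ht]
    rfl

theorem exists_eq_add_coneIntegral_of_lipschitzOnWith (hT : 0 ≤ T) {F : ℝ → ℝ} {M : ℝ}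
    (hF : LipschitzOnWith K F (Metric.closedBall 0 M)) (hF0 : F 0 = 0)
    (hTK : T * μ.real univ * K ≤ 1) {U : ℝ × ℝ →ᵇ ℝ} (hU : 2 * ‖U‖ ≤ M) :
    ∃ u : ℝ × ℝ →ᵇ ℝ, ∀ x, ∀ t ∈ Icc 0 T,
      u (x, t) = U (x, t) + 1 / 2 * coneIntegral μ (F ∘ u) (x, t) := by
  obtain ⟨H, hH, hFH⟩ := hF.extend_real
  have hM : 0 ≤ M := by linarith [norm_nonneg U]
  have hH0 : H 0 = 0 := by rw [← hFH (Metric.mem_closedBall_self hM), hF0]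
  obtain ⟨u, hu, hsol⟩ := exists_eq_add_coneIntegral_of_lipschitzWith hT hH hH0 hTK U
  have hFu : F ∘ u = H ∘ u := funext fun q =>
    hFH (mem_closedBall_zero_iff.2 ((u.norm_coe_le_norm q).trans (hu.trans hU)))
  exact ⟨u, fun x t ht => hFu ▸ hsol x t ht⟩

end PicardIteration

section FreeWave

variable {f g : ℝ → ℝ}

/-- D'Alembert's solution of the free wave equation with initial data `(f, g)`, the function `u⁰`
of the integral equation. -/
noncomputable def freeWave (f g : ℝ → ℝ) (q : ℝ × ℝ) : ℝ :=
  (f (q.1 + q.2) + f (q.1 - q.2)) / 2 + 1 / 2 * ∫ y in (q.1 - q.2)..(q.1 + q.2), g y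

lemma continuous_freeWave (hf : Continuous f) (hg : Integrable g) :
    Continuous (freeWave f g) := by
  have hprim : Continuous fun b => ∫ y in (0:ℝ)..b, g y := hg.continuous_primitive 0
  have hsub (b c : ℝ) : ∫ y in b..c, g y = (∫ y in (0:ℝ)..c, g y) - ∫ y in (0:ℝ)..b, g y :=
    (intervalIntegral.integral_interval_sub_left hg.intervalIntegrable
      hg.intervalIntegrable).symm
  unfold freeWave
  simp only [hsub (_ - _)]
  fun_prop

lemma abs_freeWave_le {C : ℝ} (hf : ∀ x, |f x| ≤ C) (hg : Integrable g) (q : ℝ × ℝ) :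
    |freeWave f g q| ≤ C + 1 / 2 * ∫ y, |g y| := by
  have hmean : |(f (q.1 + q.2) + f (q.1 - q.2)) / 2| ≤ C := by
    rw [abs_div, abs_two, div_le_iff₀ two_pos]
    linarith [abs_add_le (f (q.1 + q.2)) (f (q.1 - q.2)), hf (q.1 + q.2), hf (q.1 - q.2)]
  have hint : |∫ y in (q.1 - q.2)..(q.1 + q.2), g y| ≤ ∫ y, |g y| :=
    intervalIntegral.norm_integral_le_integral_norm_uIoc.trans <|
      setIntegral_le_integral hg.norm (.of_forall fun y => norm_nonneg (g y))
  refine (abs_add_le _ _).trans (add_le_add hmean ?_)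
  rw [abs_mul, abs_of_pos one_half_pos]
  gcongr

lemma exists_boundedContinuousFunction_coe_eq_freeWave (hf : Continuous f)
    (hfb : BddAbove (range fun x => |f x|)) (hg : Integrable g) :
    ∃ U : ℝ × ℝ →ᵇ ℝ, ⇑U = freeWave f g := by
  obtain ⟨C, hC⟩ := hfb
  exact ⟨.ofNormedAddCommGroup _ (continuous_freeWave hf hg) _
    (abs_freeWave_le (fun x => hC (mem_range_self x)) hg), rfl⟩

end FreeWave

section DecayMeasure

lemma intervalIntegral_withDensity_ofReal {E : Type*} [NormedAddCommGroup E] [NormedSpace ℝ E]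
    {ν : Measure ℝ} {w : ℝ → ℝ} (hw : Measurable w) (hw0 : ∀ y, 0 ≤ w y) (h : ℝ → E) (a b : ℝ) :
    ∫ y in a..b, h y ∂ν.withDensity (fun y => ENNReal.ofReal (w y)) =
      ∫ y in a..b, w y • h y ∂ν := by
  have hset {s : Set ℝ} (hs : MeasurableSet s) :
      ∫ y in s, h y ∂ν.withDensity (fun y => ENNReal.ofReal (w y)) = ∫ y in s, w y • h y ∂ν := by
    rw [setIntegral_withDensity_eq_setIntegral_toReal_smul hw.ennreal_ofReal
      (.of_forall fun _ => ENNReal.ofReal_lt_top) h hs]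
    simp only [ENNReal.toReal_ofReal (hw0 _)]
  simp only [intervalIntegral, hset measurableSet_Ioc]

/-- The measure on the line with density `(1 + y²) ^ (-(1 + a) / 2)`, the spatial weight of the
nonlinearity. -/
noncomputable def decayMeasure (a : ℝ) : Measure ℝ :=
  volume.withDensity fun y => ENNReal.ofReal ((1 + y ^ 2) ^ ((1 + a) / 2))⁻¹

variable {a : ℝ}

instance : NullSingletonClass (decayMeasure a) :=
  inferInstanceAs (NullSingletonClass (volume.withDensity _))

lemma isFiniteMeasure_decayMeasure (ha : 0 < a) : IsFiniteMeasure (decayMeasure a) := by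
  have hint : Integrable fun y : ℝ => ((1 + y ^ 2) ^ ((1 + a) / 2))⁻¹ := by
    refine (integrable_rpow_neg_one_add_norm_sq (E := ℝ) (μ := volume) (r := 1 + a)
      (by simpa using ha)).congr (.of_forall fun y => ?_)
    simp only [norm_eq_abs, sq_abs, neg_div]
    exact rpow_neg (by positivity) _
  exact isFiniteMeasure_withDensity_ofReal hint.2

lemma intervalIntegral_decayMeasure (h : ℝ → ℝ) (b c : ℝ) :
    ∫ y in b..c, h y ∂decayMeasure a = ∫ y in b..c, h y / (1 + y ^ 2) ^ ((1 + a) / 2) := by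
  rw [decayMeasure, intervalIntegral_withDensity_ofReal (by fun_prop) fun y => by positivity]
  simp only [smul_eq_mul, div_eq_inv_mul]

end DecayMeasure

lemma mul_rpow_le_one_of_le_inv_mul_rpow_neg {D r ε T : ℝ} (hD : 0 ≤ D) (hε : 0 < ε) (hT : 0 ≤ T)
    (hTD : T ≤ (D + 1)⁻¹ * ε ^ (-r)) : T * (D * ε ^ r) ≤ 1 := by
  have hDT : (D + 1) * (T * ε ^ r) ≤ 1 := by
    calc (D + 1) * (T * ε ^ r) ≤ (D + 1) * ((D + 1)⁻¹ * ε ^ (-r) * ε ^ r) := by gcongr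
      _ = 1 := by
        rw [rpow_neg hε.le]
        have : ε ^ r ≠ 0 := (rpow_pos_of_pos hε r).ne'
        field_simp
  have : 0 ≤ T * ε ^ r := by positivity
  linarith

theorem stmt_5_general {p κ : ℝ} (hp : 1 ≤ p) {F : ℝ → ℝ} (hF : IsPowerNonlinearity p κ F)
    {f g : ℝ → ℝ} (hf : Continuous f) (hfb : BddAbove (range fun x => |f x|)) (hg : Integrable g)
    (μ : Measure ℝ) [IsFiniteMeasure μ] [NullSingletonClass μ] :
    ∃ c > (0:ℝ), ∀ ε : ℝ, 0 < ε → ∀ T : ℝ, 0 < T → T ≤ c * ε ^ (-(p - 1)) →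
      ∃ u : ℝ → ℝ → ℝ,
        ContinuousOn (fun q : ℝ × ℝ => u q.1 q.2) (univ ×ˢ Icc 0 T) ∧
        (∃ B : ℝ, ∀ x t : ℝ, t ∈ Icc (0:ℝ) T → |u x t| ≤ B) ∧
        ∀ x t : ℝ, t ∈ Icc (0:ℝ) T →
          u x t = ε * freeWave f g (x, t)
            + 1 / 2 * coneIntegral μ (fun q => F (u q.1 q.2)) (x, t) := by
  obtain ⟨U, hU⟩ := exists_boundedContinuousFunction_coe_eq_freeWave hf hfb hg
  have hκ := hF.coeff_nonneg
  set D := μ.real univ * (κ * (2 * ‖U‖) ^ (p - 1)) with hD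
  have hD0 : 0 ≤ D := by positivity
  refine ⟨(D + 1)⁻¹, by positivity, fun ε hε T hT hTc => ?_⟩
  have hTK : T * μ.real univ * (κ * (2 * ‖U‖ * ε) ^ (p - 1)).toNNReal ≤ 1 := by
    rw [coe_toNNReal _ (by positivity), mul_rpow (by positivity) hε.le]
    calc _ = T * (D * ε ^ (p - 1)) := by rw [hD]; ring
      _ ≤ 1 := mul_rpow_le_one_of_le_inv_mul_rpow_neg hD0 hε hT.le hTc
  obtain ⟨u, hu⟩ := exists_eq_add_coneIntegral_of_lipschitzOnWith (U := ε • U) hT.le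
    (hF.lipschitzOnWith_closedBall hp hκ (2 * ‖U‖ * ε)) hF.map_zero hTK
    (by rw [norm_smul, norm_of_nonneg hε.le]; linarith)
  refine ⟨fun x t => u (x, t), u.continuous.continuousOn,
    ⟨‖u‖, fun x t _ => u.norm_coe_le_norm (x, t)⟩, fun x t ht => ?_⟩
  simpa only [BoundedContinuousFunction.smul_apply, hU, smul_eq_mul,
    Function.comp_def] using hu x t ht

/-- Lower bound of the lifespan in the case `a > 0`: there is `c > 0` such that for all
`ε > 0` and `0 < T ≤ c ε^{-(p-1)}`, the integral equation
`u = ε u⁰ + L(F(u) (1+y²)^{-(1+a)/2})`, with `F(u) = |u|^{p-1}u` or `|u|^p`,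
has a bounded continuous solution on `ℝ × [0,T]`. -/
theorem stmt_5 (p a : ℝ) (hp : 1 < p) (ha : 0 < a)
    (F : ℝ → ℝ) (hF : (∀ s : ℝ, F s = |s| ^ (p - 1) * s) ∨ (∀ s : ℝ, F s = |s| ^ p))
    (f g : ℝ → ℝ) (hf : ContDiff ℝ 2 f) (hfb : BddAbove (Set.range fun x => |f x|))
    (hg : ContDiff ℝ 1 g) (hgi : Integrable g) :
    ∃ c > (0:ℝ), ∀ ε : ℝ, 0 < ε →
      ∀ T : ℝ, 0 < T → T ≤ c * ε ^ (-(p - 1)) →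
        ∃ u : ℝ → ℝ → ℝ,
          ContinuousOn (fun q : ℝ × ℝ => u q.1 q.2) (Set.univ ×ˢ Set.Icc 0 T) ∧
          (∃ B : ℝ, ∀ x t : ℝ, t ∈ Set.Icc (0:ℝ) T → |u x t| ≤ B) ∧
          ∀ x t : ℝ, t ∈ Set.Icc (0:ℝ) T →
            u x t = ε * ((f (x + t) + f (x - t)) / 2 + 1 / 2 * ∫ y in (x - t)..(x + t), g y)
              + 1 / 2 * ∫ s in (0:ℝ)..t, ∫ y in (x - t + s)..(x + t - s),
                  F (u y s) / (1 + y ^ 2) ^ ((1 + a) / 2) := by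
  have hFp : IsPowerNonlinearity p p F := by
    rcases hF with hF | hF <;> rw [funext hF]
    exacts [isPowerNonlinearity_norm_rpow_smul hp.le, isPowerNonlinearity_norm_rpow hp.le]
  have := isFiniteMeasure_decayMeasure ha
  simpa only [freeWave, coneIntegral, intervalIntegral_decayMeasure] using
    stmt_5_general hp.le hFp hf.continuous hfb hgi (decayMeasure a)
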